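/- Let f ∈ ℝ[X_1,...,X_n, Y_1,...,Y_r] and let ℓ(x) = ((x_1+1)/(2n),...,(x_n+1)/(2n)). Define f̃(X, Y) = f(ℓ^{-1}(X), Y). If f, viewed in the ‖·‖_• norm (max of normalized coefficients with respect to the X-variables, treating Y-monomials separately), has deg_X f = d, then ‖f̃‖_• ≤ ‖f‖_• · (3n)^d. -/

import Mathlib

open MvPolynomial

noncomputable def degX {n r : ℕ} (f : MvPolynomial (Fin n ⊕ Fin r) ℝ) : ℕ :=
  f.support.sup fun s => ∑ i, s (Sum.inl i)

theorem aux_hockey (d g : ℕ) :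
    ∑ k ∈ Finset.range (d + 1), k.choose g = (d + 1).choose (g + 1) := by
  induction d with
  | zero => cases g <;> simp [Nat.choose_eq_zero_of_lt]
  | succ d ih => rw [Finset.sum_range_succ, ih, Nat.choose_succ_succ (d + 1) g, add_comm]

theorem aux_coeff_prod {σ R : Type*} [Fintype σ] [DecidableEq σ] [CommSemiring R]
    (p : σ → Polynomial R) (s : σ →₀ ℕ) :
    coeff s (∏ i, Polynomial.aeval (X i : MvPolynomial σ R) (p i)) = ∏ i, (p i).coeff (s i) := by
  have h1 : ∀ i, Polynomial.aeval (X i : MvPolynomial σ R) (p i)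
      = ∑ j ∈ (p i).support, monomial (Finsupp.single i j) ((p i).coeff j) := by
    intro i
    rw [Polynomial.aeval_eq_sum_range,
      ← Polynomial.sum_over_range' (p i) (f := fun j a => a • (X i : MvPolynomial σ R) ^ j)
      (by simp) _ (Nat.lt_succ_self _), Polynomial.sum_def]
    refine Finset.sum_congr rfl fun j _ => ?_
    rw [X_pow_eq_monomial, smul_monomial, smul_eq_mul, mul_one]
  simp_rw [h1]
  rw [Finset.prod_univ_sum, coeff_sum]
  have h2 : ∀ x : σ → ℕ, coeff s (∏ i, monomial (Finsupp.single i (x i)) ((p i).coeff (x i)))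
      = if x = s then ∏ i, (p i).coeff (x i) else 0 := by
    intro x
    have h3 : ∀ T : Finset σ, ∏ i ∈ T, monomial (Finsupp.single i (x i)) ((p i).coeff (x i))
        = monomial (∑ i ∈ T, Finsupp.single i (x i)) (∏ i ∈ T, (p i).coeff (x i)) := by
      intro T
      induction T using Finset.induction_on with
      | empty => simp
      | insert a T ha ih =>
        rw [Finset.prod_insert ha, Finset.sum_insert ha, Finset.prod_insert ha, ih, monomial_mul]
    rw [h3, coeff_monomial]
    have h4 : (∑ i, Finsupp.single i (x i) = s) ↔ x = s := by
      rw [DFunLike.ext_iff, funext_iff]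
      refine forall_congr' fun j => ?_
      simp [Finsupp.finsetSum_apply, Finsupp.single_apply]
    simp only [h4]
  simp_rw [h2]
  rw [Finset.sum_ite_eq']
  split_ifs with h
  · rfl
  · simp only [Fintype.mem_piFinset, not_forall, Polynomial.mem_support_iff, not_not] at h
    obtain ⟨i, hi⟩ := h
    exact (Finset.prod_eq_zero (Finset.mem_univ i) hi).symm

theorem aux_choose (d g : ℕ) : (d + 1).choose (g + 1) * 2 ^ g ≤ 3 ^ d := by
  induction d generalizing g with
  | zero => cases g with
    | zero => simp
    | succ g => simp [Nat.choose_eq_zero_of_lt]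
  | succ d ih =>
    cases g with
    | zero =>
      have := ih 0
      simp only [zero_add, Nat.choose_one_right, pow_zero, mul_one, pow_succ] at *
      omega
    | succ g =>
      have h1 := ih g
      have h2 := ih (g + 1)
      rw [Nat.choose_succ_succ, pow_succ 3]
      rw [pow_succ] at *
      nlinarith

theorem aux_coeff_sum_pow {n : ℕ} (γ : Fin n →₀ ℕ) (j : ℕ) :
    coeff γ ((∑ i, (X i : MvPolynomial (Fin n) ℕ)) ^ j)
      = if ∑ i, γ i = j then Nat.multinomial Finset.univ γ else 0 := by
  rw [Finset.sum_pow_eq_sum_piAntidiag, coeff_sum]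
  have h : ∀ α : Fin n → ℕ, coeff γ ((Nat.multinomial Finset.univ α : MvPolynomial (Fin n) ℕ) *
      ∏ i, X i ^ α i) = if α = γ then Nat.multinomial Finset.univ α else 0 := by
    intro α
    rw [← C_eq_coe_nat, coeff_C_mul]
    have := aux_coeff_prod (fun i => (Polynomial.X : Polynomial ℕ) ^ α i) γ
    simp only [map_pow, Polynomial.aeval_X, Polynomial.coeff_X_pow] at this
    rw [this, Finset.prod_ite_zero]
    by_cases h : α = γ
    · simp [h]
    · have : ¬ ∀ i, γ i = α i := fun h' => h (funext fun i => (h' i).symm)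
      simp [h, this]
  simp_rw [h]
  rw [Finset.sum_ite_eq']
  simp

theorem aux_identity {n : ℕ} (γ : Fin n →₀ ℕ) (k : ℕ) :
    ∑ α ∈ Finset.piAntidiag (Finset.univ : Finset (Fin n)) k,
      Nat.multinomial Finset.univ α * ∏ i, (α i).choose (γ i)
    = k.choose (∑ i, γ i) * n ^ (k - ∑ i, γ i) * Nat.multinomial Finset.univ γ := by
  have h1 : coeff γ ((∑ i, ((X i : MvPolynomial (Fin n) ℕ) + 1)) ^ k)
      = ∑ α ∈ Finset.piAntidiag (Finset.univ : Finset (Fin n)) k,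
      Nat.multinomial Finset.univ α * ∏ i, (α i).choose (γ i) := by
    rw [Finset.sum_pow_eq_sum_piAntidiag, coeff_sum]
    refine Finset.sum_congr rfl fun α _ => ?_
    rw [← C_eq_coe_nat, coeff_C_mul]
    have := aux_coeff_prod (fun i => ((Polynomial.X : Polynomial ℕ) + 1) ^ α i) γ
    simp only [map_pow, map_add, map_one, Polynomial.aeval_X, Polynomial.coeff_X_add_one_pow] at this
    rw [this]
    simp
  rw [← h1, Finset.sum_add_distrib, add_pow, coeff_sum]
  have h2 : ∀ j, coeff γ ((∑ i, (X i : MvPolynomial (Fin n) ℕ)) ^ j *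
      (∑ i : Fin n, (1 : MvPolynomial (Fin n) ℕ)) ^ (k - j) * (k.choose j : MvPolynomial (Fin n) ℕ))
      = if ∑ i, γ i = j then k.choose j * n ^ (k - j) * Nat.multinomial Finset.univ γ else 0 := by
    intro j
    have : (∑ i : Fin n, (1 : MvPolynomial (Fin n) ℕ)) ^ (k - j) * (k.choose j : MvPolynomial (Fin n) ℕ)
      = C (n ^ (k - j) * k.choose j) := by simp
    rw [mul_assoc, this, mul_comm, coeff_C_mul, aux_coeff_sum_pow]
    split_ifs <;> ring
  simp_rw [h2]
  rw [Finset.sum_ite_eq]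
  split_ifs with h
  · rfl
  · rw [Nat.choose_eq_zero_of_lt (by simpa using h)]; simp

theorem aux_total {n : ℕ} (hn : 0 < n) (γ : Fin n →₀ ℕ) (d : ℕ) :
    (∑ k ∈ Finset.range (d + 1), ∑ α ∈ Finset.piAntidiag (Finset.univ : Finset (Fin n)) k,
      Nat.multinomial Finset.univ α * ∏ i, (α i).choose (γ i)) * (2 * n) ^ (∑ i, γ i)
    ≤ Nat.multinomial Finset.univ γ * (3 * n) ^ d := by
  simp_rw [aux_identity]
  set g := ∑ i, γ i
  set M := Nat.multinomial Finset.univ γ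
  calc _ = ∑ k ∈ Finset.range (d + 1), k.choose g * n ^ (k - g) * M * (2 * n) ^ g := by
        rw [Finset.sum_mul]
    _ ≤ ∑ k ∈ Finset.range (d + 1), k.choose g * (M * 2 ^ g * n ^ d) := by
        refine Finset.sum_le_sum fun k hk => ?_
        rcases lt_or_ge k g with h | h
        · simp [Nat.choose_eq_zero_of_lt h]
        · have : n ^ (k - g) * n ^ g ≤ n ^ d := by
            rw [← pow_add]
            exact Nat.pow_le_pow_right hn (by simp at hk; omega)
          calc _ = k.choose g * (M * 2 ^ g * (n ^ (k - g) * n ^ g)) := by ring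
            _ ≤ _ := by gcongr
    _ = ((d + 1).choose (g + 1) * 2 ^ g) * (M * n ^ d) := by
        rw [← Finset.sum_mul, aux_hockey]
        ring
    _ ≤ 3 ^ d * (M * n ^ d) := Nat.mul_le_mul_right _ (aux_choose d g)
    _ = _ := by ring

theorem aux_abs_coeff (a : ℝ) (ha : 0 ≤ a) (m k : ℕ) :
    |((Polynomial.C a * Polynomial.X - 1 : Polynomial ℝ) ^ m).coeff k| = m.choose k * a ^ k := by
  have : (Polynomial.C a * Polynomial.X - 1 : Polynomial ℝ) ^ m
      = ((Polynomial.X + Polynomial.C (-1 : ℝ)) ^ m).comp (Polynomial.C a * Polynomial.X) := by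
    simp [sub_eq_add_neg]
  rw [this, Polynomial.comp_C_mul_X_coeff, Polynomial.coeff_X_add_C_pow]
  simp [abs_mul, abs_pow, abs_of_nonneg ha]

/-- if `f̃(X,Y) = f(2n·X − 1, Y)` (substituting only the `X`-variables) and
`deg_X f = d`, then `‖f̃‖_• ≤ ‖f‖_•·(3n)^d`, stated coefficientwise via the
multinomially-normalized coefficient bound defining `‖·‖_•`. -/
theorem stmt15 {n r : ℕ} (f : MvPolynomial (Fin n ⊕ Fin r) ℝ) (d : ℕ) (B : ℝ)
    (hd : degX f = d)
    (hB : ∀ s ∈ f.support,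
      |f.coeff s| ≤ (Nat.multinomial Finset.univ fun i => s (Sum.inl i) : ℕ) * B)
    (ft : MvPolynomial (Fin n ⊕ Fin r) ℝ)
    (hft : ft = aeval (fun v => match v with
      | Sum.inl i => C ((2 * n : ℕ) : ℝ) * X (Sum.inl i) - 1
      | Sum.inr j => X (Sum.inr j)) f) :
    ∀ s ∈ ft.support,
      |ft.coeff s| ≤ (Nat.multinomial Finset.univ fun i => s (Sum.inl i) : ℕ) *
        (B * (3 * n : ℕ) ^ d) := by
  classical
  intro s hs
  have hB0 : 0 ≤ B := by
    have hf : f ≠ 0 := by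
      rintro rfl
      simp [hft] at hs
    obtain ⟨t, ht⟩ := support_nonempty.mpr hf
    have h1 := (abs_nonneg _).trans (hB t ht)
    have h2 : (0 : ℝ) < (Nat.multinomial Finset.univ fun i => t (Sum.inl i) : ℕ) := by
      exact_mod_cast Nat.multinomial_pos _ _
    exact nonneg_of_mul_nonneg_right h1 h2
  have hdeg : ∀ t ∈ f.support, ∑ i, t (Sum.inl i) ≤ d := by
    intro t ht
    rw [← hd]
    exact Finset.le_sup (f := fun s : Fin n ⊕ Fin r →₀ ℕ => ∑ i, s (Sum.inl i)) ht
  let γ : Fin n →₀ ℕ := Finsupp.equivFunOnFinite.symm fun i => s (Sum.inl i)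
  have hγ : ∀ i, γ i = s (Sum.inl i) := fun i => rfl
  have hγ' : (γ : Fin n → ℕ) = fun i => s (Sum.inl i) := rfl
  have htot : (∑ k ∈ Finset.range (d + 1), ∑ α ∈ Finset.piAntidiag (Finset.univ : Finset (Fin n)) k,
      Nat.multinomial Finset.univ α * ∏ i, (α i).choose (γ i)) * (2 * n) ^ (∑ i, γ i)
    ≤ Nat.multinomial Finset.univ γ * (3 * n) ^ d := by
    rcases Nat.eq_zero_or_pos n with h0 | h0
    · subst h0
      have : d = 0 := by
        rw [← hd]; simp [degX]
      subst this
      simp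
    · exact aux_total h0 γ d
  let P : (Fin n ⊕ Fin r →₀ ℕ) → Fin n ⊕ Fin r → Polynomial ℝ := fun t v => match v with
    | Sum.inl i => (Polynomial.C ((2 * n : ℕ) : ℝ) * Polynomial.X - 1) ^ t (Sum.inl i)
    | Sum.inr j => Polynomial.X ^ t (Sum.inr j)
  have hco : ft.coeff s = ∑ t ∈ f.support, f.coeff t * ∏ v, (P t v).coeff (s v) := by
    rw [hft, aeval_def, eval₂_eq', coeff_sum]
    refine Finset.sum_congr rfl fun t _ => ?_
    rw [← aux_coeff_prod, algebraMap_eq, coeff_C_mul]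
    congr 2
    refine Finset.prod_congr rfl fun v _ => ?_
    rcases v with i | j
    · simp [P, algebraMap_eq]
    · simp [P]
  have habs : ∀ t, |∏ v, (P t v).coeff (s v)| = if (∀ j, s (Sum.inr j) = t (Sum.inr j)) then
      ((∏ i, (t (Sum.inl i)).choose (γ i) : ℕ) : ℝ) * ((2 * n : ℕ) : ℝ) ^ (∑ i, γ i) else 0 := by
    intro t
    rw [Fintype.prod_sum_type, abs_mul, Finset.abs_prod]
    simp only [P]
    simp_rw [aux_abs_coeff _ (Nat.cast_nonneg (2 * n)), Polynomial.coeff_X_pow]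
    rw [Finset.prod_mul_distrib, Finset.prod_pow_eq_pow_sum, Finset.prod_ite_zero]
    simp only [Finset.mem_univ, true_implies, Finset.prod_const_one, hγ]
    split_ifs <;> simp
  let F : (Fin n → ℕ) → ℕ := fun α => Nat.multinomial Finset.univ α * ∏ i, (α i).choose (γ i)
  let S := f.support.filter fun t => ∀ j, s (Sum.inr j) = t (Sum.inr j)
  let π : (Fin n ⊕ Fin r →₀ ℕ) → Fin n → ℕ := fun t i => t (Sum.inl i)
  have hinj : Set.InjOn π S := by
    intro t ht t' ht' h
    simp only [S, Finset.coe_filter, Set.mem_ofPred_eq] at ht ht'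
    ext v
    rcases v with i | j
    · exact congrFun h i
    · rw [← ht.2 j, ht'.2 j]
  have hsum : ∑ t ∈ S, F (π t) ≤ ∑ k ∈ Finset.range (d + 1),
      ∑ α ∈ Finset.piAntidiag (Finset.univ : Finset (Fin n)) k, F α := by
    rw [← Finset.sum_image hinj, ← Finset.sum_biUnion]
    · refine Finset.sum_le_sum_of_subset ?_
      intro α hα
      obtain ⟨t, ht, rfl⟩ := Finset.mem_image.mp hα
      have := hdeg t (Finset.mem_filter.mp ht).1
      simp only [Finset.mem_biUnion, Finset.mem_range, Finset.mem_piAntidiag]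
      exact ⟨_, Nat.lt_succ_of_le this, rfl, by simp⟩
    · intro a _ b _ hab
      refine Finset.disjoint_left.mpr fun α h1 h2 => hab ?_
      rw [← (Finset.mem_piAntidiag.mp h1).1, ← (Finset.mem_piAntidiag.mp h2).1]
  calc |ft.coeff s| ≤ ∑ t ∈ f.support, |f.coeff t| * |∏ v, (P t v).coeff (s v)| := by
        rw [hco]
        refine (Finset.abs_sum_le_sum_abs _ _).trans (le_of_eq ?_)
        simp_rw [abs_mul]
    _ ≤ ∑ t ∈ f.support, if (∀ j, s (Sum.inr j) = t (Sum.inr j)) then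
          B * ((F (π t) : ℕ) : ℝ) * ((2 * n : ℕ) : ℝ) ^ (∑ i, γ i) else 0 := by
        refine Finset.sum_le_sum fun t ht => ?_
        rw [habs]
        split_ifs
        · refine (mul_le_mul_of_nonneg_right (hB t ht) (by positivity)).trans (le_of_eq ?_)
          simp only [F, π]
          push_cast
          ring
        · simp
    _ = B * (((∑ t ∈ S, F (π t)) * (2 * n) ^ (∑ i, γ i) : ℕ) : ℝ) := by
        rw [← Finset.sum_filter]
        push_cast
        rw [Finset.sum_mul, Finset.mul_sum]
        refine Finset.sum_congr rfl fun t _ => by ring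
    _ ≤ B * ((Nat.multinomial Finset.univ γ * (3 * n) ^ d : ℕ) : ℝ) := by
        refine mul_le_mul_of_nonneg_left ?_ hB0
        exact_mod_cast (Nat.mul_le_mul_right _ hsum).trans htot
    _ = _ := by
        rw [hγ']
        push_cast
        ring
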